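/- The sum of f^λ over all partitions λ of n, where f^λ is the number of standard Young tableaux of shape λ, equals the number of involutions in S_n. -/

import Mathlib

/-- The cells of the Young diagram of a partition given as a list `l` of row lengths:
row `i` (0-indexed) has cells `(i, j)` for `j < l_i`. -/
def cells (l : List ℕ) : Set (ℕ × ℕ) := {c | c.2 < l.getD c.1 0}

/-- Rows of `T` increase left to right on the diagram of `l`. -/
def RowInc (l : List ℕ) (T : ℕ × ℕ → ℕ) : Prop :=
  ∀ i j j', (i, j) ∈ cells l → (i, j') ∈ cells l → j < j' → T (i, j) < T (i, j')

/-- Columns of `T` increase top to bottom on the diagram of `l`. -/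
def ColInc (l : List ℕ) (T : ℕ × ℕ → ℕ) : Prop :=
  ∀ i i' j, (i, j) ∈ cells l → (i', j) ∈ cells l → i < i' → T (i, j) < T (i', j)

/-- `T` is a standard Young tableau of shape `l`: a bijective filling of the diagram by
`1, …, |l|`, increasing along rows and columns (and `0` off the diagram, to normalize). -/
def IsSYT (l : List ℕ) (T : ℕ × ℕ → ℕ) : Prop :=
  Set.BijOn T (cells l) (Set.Icc 1 l.sum) ∧ (∀ c, c ∉ cells l → T c = 0) ∧
    RowInc l T ∧ ColInc l T

/-- `f^λ`, the number of standard Young tableaux of shape `l`. -/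
noncomputable def fSYT (l : List ℕ) : ℕ := Set.ncard {T | IsSYT l T}

noncomputable def remS (f : ℕ →₀ ℕ) : Finset ℕ := f.support.filter (fun i => f (i+1) < f i)

noncomputable def addS (f : ℕ →₀ ℕ) : Finset ℕ := insert 0 ((remS f).image (· + 1))

def Anti (f : ℕ →₀ ℕ) : Prop := ∀ i, f (i+1) ≤ f i

noncomputable abbrev dl (i : ℕ) : ℕ →₀ ℕ := Finsupp.single i 1

lemma mem_remS {f : ℕ →₀ ℕ} {i : ℕ} : i ∈ remS f ↔ f (i+1) < f i := by
  simp only [remS, Finset.mem_filter, Finsupp.mem_support_iff]; omega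

lemma mem_addS {f : ℕ →₀ ℕ} {i : ℕ} : i ∈ addS f ↔ i = 0 ∨ f i < f (i-1) := by
  simp only [addS, Finset.mem_insert, Finset.mem_image, mem_remS]
  cases i with
  | zero => simp
  | succ k => simp

lemma card_addS (f : ℕ →₀ ℕ) : (addS f).card = (remS f).card + 1 := by
  rw [addS, Finset.card_insert_of_notMem (by simp),
    Finset.card_image_of_injective _ (add_left_injective 1)]

lemma dl_add (f : ℕ →₀ ℕ) (i k : ℕ) : (f + dl i) k = f k + if i = k then 1 else 0 := by
  simp [Finsupp.single_apply]

lemma dl_sub (f : ℕ →₀ ℕ) (i k : ℕ) : (f - dl i) k = f k - if i = k then 1 else 0 := by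
  simp [Finsupp.single_apply]

lemma Anti.add {f : ℕ →₀ ℕ} (h : Anti f) {i : ℕ} (hi : i ∈ addS f) : Anti (f + dl i) := by
  intro k
  rw [mem_addS] at hi
  rw [dl_add, dl_add]
  have := h k
  by_cases h1 : i = k + 1
  · subst h1; simp at hi ⊢; omega
  · split_ifs <;> omega

lemma Anti.sub {f : ℕ →₀ ℕ} (h : Anti f) {i : ℕ} (hi : i ∈ remS f) : Anti (f - dl i) := by
  intro k
  rw [mem_remS] at hi
  rw [dl_sub, dl_sub]
  have := h k
  by_cases h1 : i = k
  · subst h1; simp; omega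
  · split_ifs <;> omega

lemma sub_add_dl {f : ℕ →₀ ℕ} {i : ℕ} (hi : i ∈ remS f) : f - dl i + dl i = f := by
  rw [mem_remS] at hi
  ext k
  rw [dl_add, dl_sub]
  split_ifs with h
  · subst h; omega
  · omega

lemma mem_addS_sub {f : ℕ →₀ ℕ} (h : Anti f) {i : ℕ} (hi : i ∈ remS f) : i ∈ addS (f - dl i) := by
  rw [mem_remS] at hi
  rw [mem_addS, dl_sub, dl_sub]
  cases i with
  | zero => simp
  | succ k => right; have := h k; simp; omega

lemma mem_remS_add {f : ℕ →₀ ℕ} (h : Anti f) (i : ℕ) : i ∈ remS (f + dl i) := by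
  rw [mem_remS, dl_add, dl_add]
  have := h i
  simp; omega

noncomputable def eY : ℕ → (ℕ →₀ ℕ) → ℕ
  | 0, f => if f = 0 then 1 else 0
  | n+1, f => ∑ j ∈ remS f, eY n (f - dl j)

lemma swap_sum {f : ℕ →₀ ℕ} (h : Anti f) (φ : (ℕ →₀ ℕ) → ℕ) :
    ∑ i ∈ addS f, ∑ j ∈ (remS (f + dl i)).erase i, φ (f + dl i - dl j) =
    ∑ j ∈ remS f, ∑ i ∈ (addS (f - dl j)).erase j, φ (f - dl j + dl i) := by
  have key : ∀ i j, (i ∈ addS f ∧ j ∈ (remS (f + dl i)).erase i) ↔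
      (i ∈ (addS (f - dl j)).erase j ∧ j ∈ remS f) := by
    intro i j
    simp only [Finset.mem_erase, mem_addS, mem_remS, dl_add, dl_sub]
    have h1 := h j
    by_cases hij : i = j
    · simp [hij]
    by_cases h2 : i = j + 1
    · subst h2; simp; omega
    · have : ¬ (j = i - 1 ∧ i ≠ 0) := by omega
      by_cases h0 : i = 0
      · subst h0; simp [hij]; try omega
      · rw [if_neg h2, if_neg hij, if_neg (Ne.symm hij), if_neg (by omega)]
        omega
  rw [Finset.sum_comm' key]
  refine Finset.sum_congr rfl fun j hj => Finset.sum_congr rfl fun i hi => ?_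
  congr 1
  rw [mem_remS] at hj
  ext k
  simp only [dl_add, dl_sub]
  have hij : i ≠ j := (Finset.mem_erase.1 hi).1
  split_ifs <;> first | omega | (subst_vars; omega)

lemma eY_up (n : ℕ) : ∀ f, Anti f → ∑ i ∈ addS f, eY n (f + dl i) = n * eY (n-1) f := by
  induction n with
  | zero =>
    intro f _
    simp only [zero_mul]
    refine Finset.sum_eq_zero fun i _ => ?_
    rw [eY, if_neg]
    intro h
    have := DFunLike.congr_fun h i
    rw [dl_add] at this
    simp at this
  | succ n ih =>
    intro f hf
    have h1 : ∀ i ∈ addS f, eY (n+1) (f + dl i) = eY n f +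
        ∑ j ∈ (remS (f + dl i)).erase i, eY n (f + dl i - dl j) := by
      intro i _
      rw [eY, ← Finset.add_sum_erase _ _ (mem_remS_add hf i), add_tsub_cancel_right]
    rw [Finset.sum_congr rfl h1, Finset.sum_add_distrib, swap_sum hf, Finset.sum_const, card_addS]
    have h2 : ∑ j ∈ remS f, (eY n f + ∑ i ∈ (addS (f - dl j)).erase j, eY n (f - dl j + dl i)) =
        ∑ j ∈ remS f, n * eY (n-1) (f - dl j) := by
      refine Finset.sum_congr rfl fun j hj => ?_
      rw [← ih _ (hf.sub hj), ← Finset.add_sum_erase _ _ (mem_addS_sub hf hj), sub_add_dl hj]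
    rw [Finset.sum_add_distrib, Finset.sum_const, ← Finset.mul_sum] at h2
    have h3 : n * ∑ j ∈ remS f, eY (n-1) (f - dl j) = n * eY n f := by
      cases n with
      | zero => simp
      | succ m => rfl
    rw [h3] at h2
    simp only [smul_eq_mul, Nat.add_sub_cancel] at h2 ⊢
    linarith

noncomputable def PY : ℕ → Finset (ℕ →₀ ℕ)
  | 0 => {0}
  | n+1 => (PY n).biUnion (fun f => (addS f).image (fun i => f + dl i))

lemma mem_PY {n : ℕ} : ∀ {f : ℕ →₀ ℕ}, f ∈ PY n ↔ Anti f ∧ f.degree = n := by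
  induction n with
  | zero =>
    intro f
    simp only [PY, Finset.mem_singleton, Finsupp.degree_eq_zero_iff]
    constructor
    · rintro rfl; exact ⟨fun _ => by simp, rfl⟩
    · exact fun h => h.2
  | succ n ih =>
    intro f
    simp only [PY, Finset.mem_biUnion, Finset.mem_image, ih]
    constructor
    · rintro ⟨g, ⟨hg, hd⟩, i, hi, rfl⟩
      exact ⟨hg.add hi, by rw [map_add, hd, Finsupp.degree_single]⟩
    · rintro ⟨hf, hd⟩
      have hne : f.support.Nonempty := by
        rw [Finsupp.support_nonempty_iff]
        rintro rfl
        simp at hd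
      have hj : f.support.max' hne ∈ remS f := by
        rw [mem_remS]
        have h1 := Finset.max'_mem _ hne
        rw [Finsupp.mem_support_iff] at h1
        have h2 : f (f.support.max' hne + 1) = 0 := by
          by_contra hc
          have := Finset.le_max' f.support _ (Finsupp.mem_support_iff.2 hc)
          omega
        omega
      refine ⟨_, ⟨hf.sub hj, ?_⟩, _, mem_addS_sub hf hj, sub_add_dl hj⟩
      have := congrArg Finsupp.degree (sub_add_dl hj)
      rw [map_add, hd, Finsupp.degree_single] at this
      omega

lemma PY_double (n : ℕ) (φ : (ℕ →₀ ℕ) → (ℕ →₀ ℕ) → ℕ) :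
    ∑ f ∈ PY (n+1), ∑ j ∈ remS f, φ f (f - dl j) =
    ∑ g ∈ PY n, ∑ i ∈ addS g, φ (g + dl i) g := by
  rw [Finset.sum_sigma', Finset.sum_sigma']
  refine Finset.sum_bij' (fun x _ => ⟨x.1 - dl x.2, x.2⟩) (fun x _ => ⟨x.1 + dl x.2, x.2⟩) ?_ ?_ ?_ ?_ ?_
  · rintro ⟨f, j⟩ h
    simp only [Finset.mem_sigma, mem_PY] at h ⊢
    obtain ⟨⟨hf, hd⟩, hj⟩ := h
    refine ⟨⟨hf.sub hj, ?_⟩, mem_addS_sub hf hj⟩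
    have := congrArg Finsupp.degree (sub_add_dl hj)
    rw [map_add, hd, Finsupp.degree_single] at this
    omega
  · rintro ⟨f, j⟩ h
    simp only [Finset.mem_sigma, mem_PY] at h ⊢
    obtain ⟨⟨hf, hd⟩, hj⟩ := h
    exact ⟨⟨hf.add hj, by rw [map_add, hd, Finsupp.degree_single]⟩, mem_remS_add hf j⟩
  · rintro ⟨f, j⟩ h
    simp only [Finset.mem_sigma, mem_PY] at h
    simp only [sub_add_dl h.2]
  · rintro ⟨f, j⟩ h
    simp
  · rintro ⟨f, j⟩ h
    simp only [Finset.mem_sigma, mem_PY] at h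
    simp only [sub_add_dl h.2]

noncomputable def tY (n : ℕ) : ℕ := ∑ f ∈ PY n, eY n f

lemma tY_rec (n : ℕ) : tY (n+2) = tY (n+1) + (n+1) * tY n := by
  have h1 : tY (n+2) = ∑ g ∈ PY (n+1), (addS g).card * eY (n+1) g := by
    have := PY_double (n+1) (fun _ g => eY (n+1) g)
    rw [tY]
    simp only [Finset.sum_const, smul_eq_mul] at this
    exact this
  have h2 : ∑ g ∈ PY (n+1), (remS g).card * eY (n+1) g = (n+1) * tY n := by
    have := PY_double n (fun f _ => eY (n+1) f)
    simp only [Finset.sum_const, smul_eq_mul] at this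
    rw [this, tY, Finset.mul_sum]
    refine Finset.sum_congr rfl fun g hg => ?_
    simpa using eY_up (n+1) g (mem_PY.1 hg).1
  rw [h1, ← h2, tY, ← Finset.sum_add_distrib]
  refine Finset.sum_congr rfl fun g _ => ?_
  rw [card_addS]; ring

lemma remS_zero : remS 0 = ∅ := by ext; simp [mem_remS]

lemma tY_zero : tY 0 = 1 := by simp [tY, PY, eY]

lemma tY_one : tY 1 = 1 := by
  have h := PY_double 0 (fun _ g => eY 0 g)
  rw [tY]
  refine (h.trans ?_)
  simp [PY, addS, remS_zero, eY]

def IsInv {α : Type*} (w : Equiv.Perm α) : Prop := ∀ x, w (w x) = x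

lemma isInv_iff {α : Type*} (w : Equiv.Perm α) : w⁻¹ = w ↔ IsInv w := by
  constructor
  · intro h x
    nth_rewrite 1 [← h]
    simp
  · intro h
    ext x
    rw [Equiv.Perm.inv_eq_iff_eq, h]

noncomputable def iY (n : ℕ) : ℕ := Nat.card {w : Equiv.Perm (Fin n) // IsInv w}

/-- involutions fixing a point -/
lemma iY_fix0 (n : ℕ) : Nat.card {w : Equiv.Perm (Fin (n+1)) // IsInv w ∧ w 0 = 0} = iY n := by
  symm
  refine Nat.card_congr (Equiv.ofBijective
    (fun w => ⟨Equiv.Perm.decomposeFin.symm (0, w.1), ?_, ?_⟩) ⟨?_, ?_⟩)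
  · intro x
    refine Fin.cases ?_ (fun i => ?_) x
    · simp
    · simp [w.2 i]
  · simp
  · intro a b hab
    simp only [Subtype.mk.injEq, EmbeddingLike.apply_eq_iff_eq, Prod.mk.injEq, true_and] at hab
    exact Subtype.ext hab
  · rintro ⟨w, hw, h0⟩
    obtain ⟨⟨p, σ⟩, rfl⟩ := Equiv.Perm.decomposeFin.symm.surjective w
    have hp : p = 0 := by simpa using h0
    subst hp
    refine ⟨⟨σ, fun i => ?_⟩, rfl⟩
    have := hw i.succ
    simpa using this

lemma isInv_conj {α : Type*} (s w : Equiv.Perm α) (h : IsInv w) : IsInv (s * w * s⁻¹) := by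
  intro x
  have := h (s⁻¹ x)
  have e : ∀ y, s⁻¹ (s y) = y := s.symm_apply_apply
  have e' : ∀ y, s (s⁻¹ y) = y := s.apply_symm_apply
  simp only [Equiv.Perm.mul_apply, e, this, e']

lemma iY_fix (n : ℕ) (a : Fin (n+1)) :
    Nat.card {w : Equiv.Perm (Fin (n+1)) // IsInv w ∧ w a = a} = iY n := by
  rw [← iY_fix0]
  refine Nat.card_congr ((MulAut.conj (Equiv.swap 0 a)).toEquiv.subtypeEquiv ?_)
  intro w
  simp only [MulEquiv.toEquiv_eq_coe, EquivLike.coe_coe, MulAut.conj_apply]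
  constructor
  · rintro ⟨h, h0⟩
    exact ⟨isInv_conj _ _ h, by simp [h0]⟩
  · rintro ⟨h, h0⟩
    have := isInv_conj (Equiv.swap 0 a)⁻¹ _ h
    refine ⟨by simpa [mul_assoc] using this, ?_⟩
    simp only [Equiv.Perm.mul_apply, Equiv.swap_inv, Equiv.swap_apply_left] at h0
    have := congrArg (Equiv.swap 0 a) h0
    simpa using this

lemma dec_succ_inv (n : ℕ) (a : Fin (n+1)) (σ : Equiv.Perm (Fin (n+1))) :
    IsInv (Equiv.Perm.decomposeFin.symm (a.succ, σ)) ↔ IsInv σ ∧ σ a = a := by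
  set w := Equiv.Perm.decomposeFin.symm (a.succ, σ) with hw
  have w0 : w 0 = a.succ := by simp [hw]
  have ws : ∀ i, w i.succ = Equiv.swap 0 a.succ (σ i).succ := by intro i; simp [hw]
  have ws' : ∀ i, σ i ≠ a → w i.succ = (σ i).succ := by
    intro i hi
    rw [ws, Equiv.swap_apply_of_ne_of_ne (Fin.succ_ne_zero _) (by simpa using hi)]
  constructor
  · intro h
    have ha : σ a = a := by
      have := h 0
      rw [w0, ws] at this
      by_contra hc
      rw [Equiv.swap_apply_of_ne_of_ne (Fin.succ_ne_zero _) (by simpa using hc)] at this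
      exact Fin.succ_ne_zero _ this
    refine ⟨fun i => ?_, ha⟩
    by_cases hi : i = a
    · rw [hi, ha, ha]
    · have h1 : σ i ≠ a := fun hc => hi (σ.injective (hc.trans ha.symm))
      have h2 : σ (σ i) ≠ a := fun hc => h1 (σ.injective (hc.trans ha.symm))
      have := h i.succ
      rw [ws' _ h1, ws' _ h2] at this
      simpa using this
  · rintro ⟨h, ha⟩ x
    refine Fin.cases ?_ (fun i => ?_) x
    · rw [w0, ws, ha]; simp
    · by_cases hi : i = a
      · rw [hi, ws, ha, Equiv.swap_apply_right, w0]
      · have h1 : σ i ≠ a := fun hc => hi (σ.injective (hc.trans ha.symm))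
        have h2 : σ (σ i) ≠ a := fun hc => h1 (σ.injective (hc.trans ha.symm))
        rw [ws' _ h1, ws' _ h2, h]

lemma dec_zero_inv (n : ℕ) (σ : Equiv.Perm (Fin n)) :
    IsInv (Equiv.Perm.decomposeFin.symm (0, σ)) ↔ IsInv σ := by
  constructor
  · intro hw i
    have := hw i.succ
    simpa using this
  · intro h x
    refine Fin.cases ?_ (fun i => ?_) x
    · simp
    · simp [h i]

lemma iY_rec (n : ℕ) : iY (n+2) = iY (n+1) + (n+1) * iY n := by
  classical
  have e1 : iY (n+2) = ∑ p : Fin (n+2), Nat.card {σ : Equiv.Perm (Fin (n+1)) //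
      IsInv (Equiv.Perm.decomposeFin.symm (p, σ))} := by
    rw [iY, ← Nat.card_sigma]
    refine Nat.card_congr ?_
    refine (Equiv.subtypeEquiv Equiv.Perm.decomposeFin
      (q := fun x => IsInv (Equiv.Perm.decomposeFin.symm x)) ?_).trans ?_
    · intro w; simp
    · exact ⟨fun x => ⟨x.1.1, x.1.2, x.2⟩, fun x => ⟨(x.1, x.2.1), x.2.2⟩,
        fun _ => rfl, fun _ => rfl⟩
  rw [e1, Fin.sum_univ_succ]
  simp only [dec_succ_inv, dec_zero_inv, iY_fix]
  simp [iY]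

lemma iY_sub (n : ℕ) [Subsingleton (Fin n)] : iY n = 1 := by
  rw [iY, Nat.card_eq_one_iff_unique]
  exact ⟨inferInstance, ⟨1, fun _ => rfl⟩⟩

lemma tY_eq_iY (n : ℕ) : tY n = iY n := by
  induction n using Nat.twoStepInduction with
  | zero => rw [tY_zero, iY_sub]
  | one => rw [tY_one, iY_sub]
  | more n h1 h2 => rw [tY_rec, iY_rec, h1, h2]

def IsS (n : ℕ) (f : ℕ →₀ ℕ) (T : ℕ × ℕ → ℕ) : Prop :=
  Set.BijOn T {c | c.2 < f c.1} (Set.Icc 1 n) ∧ (∀ c, c ∉ {c : ℕ × ℕ | c.2 < f c.1} → T c = 0) ∧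
    (∀ i j j', j < f i → j' < f i → j < j' → T (i, j) < T (i, j')) ∧
    (∀ i i' j, j < f i → j < f i' → i < i' → T (i, j) < T (i', j))

lemma IsS.le {n : ℕ} {f : ℕ →₀ ℕ} {T : ℕ × ℕ → ℕ} (h : IsS n f T) (c : ℕ × ℕ) : T c ≤ n := by
  by_cases hc : c ∈ {c : ℕ × ℕ | c.2 < f c.1}
  · exact (h.1.mapsTo hc).2
  · rw [h.2.1 c hc]; omega

lemma mem_sub_cells {f : ℕ →₀ ℕ} {i : ℕ} (hi : i ∈ remS f) (a b : ℕ) :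
    b < (f - dl i) a ↔ b < f a ∧ ¬ (a = i ∧ b = f i - 1) := by
  rw [mem_remS] at hi
  rw [dl_sub]
  split_ifs with h
  · subst h; simp; omega
  · have : a ≠ i := fun h' => h h'.symm
    simp [this]

lemma Anti.anti {f : ℕ →₀ ℕ} (h : Anti f) {a b : ℕ} (hab : a ≤ b) : f b ≤ f a :=
  antitone_nat_of_succ_le h hab

lemma IsS_down {n : ℕ} {f : ℕ →₀ ℕ} (hf : Anti f) {T : ℕ × ℕ → ℕ} (h : IsS (n+1) f T) :
    ∃ i ∈ remS f, T (i, f i - 1) = n+1 ∧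
      IsS n (f - dl i) (Function.update T (i, f i - 1) 0) := by
  obtain ⟨⟨hm, hinj, hs⟩, h0, hr, hc⟩ := id h
  obtain ⟨⟨i, j⟩, hij, hT⟩ := hs (show n+1 ∈ Set.Icc 1 (n+1) by simp)
  have hij' : j < f i := hij
  have hj : j = f i - 1 := by
    by_contra hne
    have := hr i j (j+1) hij' (by omega) (by omega)
    have := h.le (i, j+1)
    omega
  have hi : i ∈ remS f := by
    rw [mem_remS]
    by_contra hne
    have := hc i (i+1) j hij' (by omega) (by omega)
    have := h.le (i+1, j)
    omega
  subst hj
  refine ⟨i, hi, hT, ⟨?_, ?_, ?_⟩, ?_, ?_, ?_⟩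
  · rintro ⟨a, b⟩ hab
    obtain ⟨h1, h2⟩ := (mem_sub_cells hi a b).1 hab
    have h3 : (a, b) ≠ (i, f i - 1) := by simpa using h2
    rw [Function.update_of_ne h3]
    have h4 : (a, b) ∈ {c : ℕ × ℕ | c.2 < f c.1} := h1
    have h5 := hm h4
    have h6 : T (a, b) ≠ n + 1 := fun h => h3 (hinj h4 hij (h.trans hT.symm))
    simp only [Set.mem_Icc] at h5 ⊢
    omega
  · rintro ⟨a, b⟩ hab ⟨a', b'⟩ hab' he
    obtain ⟨h1, h2⟩ := (mem_sub_cells hi a b).1 hab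
    obtain ⟨h1', h2'⟩ := (mem_sub_cells hi a' b').1 hab'
    have h3 : (a, b) ≠ (i, f i - 1) := by simpa using h2
    have h3' : (a', b') ≠ (i, f i - 1) := by simpa using h2'
    rw [Function.update_of_ne h3, Function.update_of_ne h3'] at he
    exact hinj h1 h1' he
  · intro v hv
    simp only [Set.mem_Icc] at hv
    obtain ⟨⟨a, b⟩, hab, hv'⟩ := hs (show v ∈ Set.Icc 1 (n+1) by simp; omega)
    have h3 : (a, b) ≠ (i, f i - 1) := by
      intro h; rw [h] at hv'; omega
    refine ⟨(a, b), (mem_sub_cells hi a b).2 ⟨hab, by simpa using h3⟩, ?_⟩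
    rw [Function.update_of_ne h3, hv']
  · rintro ⟨a, b⟩ hab
    by_cases h3 : (a, b) = (i, f i - 1)
    · rw [h3, Function.update_self]
    · rw [Function.update_of_ne h3]
      apply h0
      intro h1
      exact hab ((mem_sub_cells hi a b).2 ⟨h1, by simpa using h3⟩)
  · intro a b b' h1 h2 h3
    obtain ⟨h1, h1'⟩ := (mem_sub_cells hi _ _).1 h1
    obtain ⟨h2, h2'⟩ := (mem_sub_cells hi _ _).1 h2
    rw [Function.update_of_ne (by simpa using h1'), Function.update_of_ne (by simpa using h2')]
    exact hr _ _ _ h1 h2 h3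
  · intro a b b' h1 h2 h3
    obtain ⟨h1, h1'⟩ := (mem_sub_cells hi _ _).1 h1
    obtain ⟨h2, h2'⟩ := (mem_sub_cells hi _ _).1 h2
    rw [Function.update_of_ne (by simpa using h1'), Function.update_of_ne (by simpa using h2')]
    exact hc _ _ _ h1 h2 h3

lemma IsS_up {n : ℕ} {f : ℕ →₀ ℕ} (hf : Anti f) {T : ℕ × ℕ → ℕ} {i : ℕ} (hi : i ∈ remS f)
    (h : IsS n (f - dl i) T) : IsS (n+1) f (Function.update T (i, f i - 1) (n+1)) := by
  obtain ⟨⟨hm, hinj, hs⟩, h0, hr, hc⟩ := id h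
  have hi' := mem_remS.1 hi
  have hmem : ∀ a b, b < f a → (a, b) ≠ (i, f i - 1) → b < (f - dl i) a := fun a b h1 h2 =>
    (mem_sub_cells hi a b).2 ⟨h1, by simpa using h2⟩
  refine ⟨⟨?_, ?_, ?_⟩, ?_, ?_, ?_⟩
  · rintro ⟨a, b⟩ hab
    by_cases h3 : (a, b) = (i, f i - 1)
    · rw [h3, Function.update_self]; simp
    · rw [Function.update_of_ne h3]
      have h4 : (a, b) ∈ {c : ℕ × ℕ | c.2 < (f - dl i) c.1} := hmem a b hab h3
      have := hm h4
      simp only [Set.mem_Icc] at this ⊢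
      omega
  · rintro ⟨a, b⟩ hab ⟨a', b'⟩ hab' he
    by_cases h3 : (a, b) = (i, f i - 1) <;> by_cases h3' : (a', b') = (i, f i - 1)
    · rw [h3, h3']
    · rw [h3, Function.update_self, Function.update_of_ne h3'] at he
      have := h.le (a', b')
      omega
    · rw [h3', Function.update_self, Function.update_of_ne h3] at he
      have := h.le (a, b)
      omega
    · rw [Function.update_of_ne h3, Function.update_of_ne h3'] at he
      exact hinj (hmem a b hab h3) (hmem a' b' hab' h3') he
  · intro v hv
    simp only [Set.mem_Icc] at hv
    by_cases hv1 : v = n + 1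
    · refine ⟨(i, f i - 1), ?_, ?_⟩
      · simp only [Set.mem_ofPred_eq]; omega
      · rw [Function.update_self, hv1]
    · obtain ⟨⟨a, b⟩, hab, hv'⟩ := hs (show v ∈ Set.Icc 1 n by simp; omega)
      obtain ⟨h1, h2⟩ := (mem_sub_cells hi a b).1 hab
      exact ⟨(a, b), h1, by rw [Function.update_of_ne (by simpa using h2), hv']⟩
  · rintro ⟨a, b⟩ hab
    have h3 : (a, b) ≠ (i, f i - 1) := by
      intro h3
      rw [h3] at hab
      simp only [Set.mem_ofPred_eq] at hab
      omega
    rw [Function.update_of_ne h3]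
    apply h0
    intro h1
    exact hab ((mem_sub_cells hi a b).1 h1).1
  · intro a b b' h1 h2 hlt
    have h3 : (a, b) ≠ (i, f i - 1) := by
      intro h3
      simp only [Prod.mk.injEq] at h3
      obtain ⟨rfl, rfl⟩ := h3
      omega
    rw [Function.update_of_ne h3]
    by_cases h3' : (a, b') = (i, f i - 1)
    · rw [h3', Function.update_self]
      have := h.le (a, b)
      omega
    · rw [Function.update_of_ne h3']
      exact hr _ _ _ (hmem _ _ h1 h3) (hmem _ _ h2 h3') hlt
  · intro a a' b h1 h2 hlt
    have h3 : (a, b) ≠ (i, f i - 1) := by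
      intro h3
      simp only [Prod.mk.injEq] at h3
      obtain ⟨rfl, rfl⟩ := h3
      have := hf.anti (show a + 1 ≤ a' from hlt)
      omega
    rw [Function.update_of_ne h3]
    by_cases h3' : (a', b) = (i, f i - 1)
    · rw [h3', Function.update_self]
      have := h.le (a, b)
      omega
    · rw [Function.update_of_ne h3']
      exact hc _ _ _ (hmem _ _ h1 h3) (hmem _ _ h2 h3') hlt

open Classical in
noncomputable def FS : ℕ → (ℕ →₀ ℕ) → Finset (ℕ × ℕ → ℕ)
  | 0, f => if f = 0 then {0} else ∅
  | n+1, f => (remS f).biUnion (fun i =>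
      (FS n (f - dl i)).image (fun T => Function.update T (i, f i - 1) (n+1)))

lemma mem_FS {n : ℕ} : ∀ {f : ℕ →₀ ℕ}, Anti f → ∀ {T}, T ∈ FS n f ↔ IsS n f T := by
  induction n with
  | zero =>
    intro f hf T
    rw [FS]
    split_ifs with h
    · subst h
      simp only [Finset.mem_singleton]
      constructor
      · rintro rfl
        simp [IsS]
      · intro h
        funext c
        exact h.2.1 c (by simp)
    · simp only [Finset.notMem_empty, false_iff]
      intro hT
      apply h
      ext a
      by_contra hc
      have : (a, 0) ∈ {c : ℕ × ℕ | c.2 < f c.1} := Nat.pos_of_ne_zero hc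
      have := hT.1.mapsTo this
      simp at this
  | succ n ih =>
    intro f hf T
    simp only [FS, Finset.mem_biUnion, Finset.mem_image]
    constructor
    · rintro ⟨i, hi, T', hT', rfl⟩
      exact IsS_up hf hi ((ih (hf.sub hi)).1 hT')
    · intro h
      obtain ⟨i, hi, h1, h2⟩ := IsS_down hf h
      refine ⟨i, hi, _, (ih (hf.sub hi)).2 h2, ?_⟩
      rw [Function.update_idem, ← h1, Function.update_eq_self]

lemma card_FS {n : ℕ} : ∀ {f : ℕ →₀ ℕ}, Anti f → (FS n f).card = eY n f := by
  classical
  induction n with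
  | zero =>
    intro f hf
    rw [FS, eY]
    split_ifs <;> simp
  | succ n ih =>
    intro f hf
    rw [FS, eY, Finset.card_biUnion]
    · refine Finset.sum_congr rfl fun i hi => ?_
      rw [← ih (hf.sub hi)]
      apply Finset.card_image_of_injOn
      intro T1 h1 T2 h2 he
      have g1 := (mem_FS (hf.sub hi)).1 h1
      have g2 := (mem_FS (hf.sub hi)).1 h2
      have hn : (i, f i - 1) ∉ {c : ℕ × ℕ | c.2 < (f - dl i) c.1} := by
        simp [mem_sub_cells hi]
      funext c
      by_cases hc : c = (i, f i - 1)
      · rw [hc, g1.2.1 _ hn, g2.2.1 _ hn]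
      · have := congrFun he c
        simpa [Function.update_of_ne hc] using this
    · intro i hi j hj hij
      simp only [Function.onFun]
      rw [Finset.disjoint_left]
      intro T h1 h2
      obtain ⟨T1, k1, rfl⟩ := Finset.mem_image.1 h1
      obtain ⟨T2, h2, he⟩ := Finset.mem_image.1 h2
      have g1 := (mem_FS (hf.sub hi)).1 k1
      have := congrFun he (j, f j - 1)
      have hne : (j, f j - 1) ≠ (i, f i - 1) := by
        intro h; exact hij (congrArg Prod.fst h).symm
      rw [Function.update_self, Function.update_of_ne hne] at this
      have := g1.le (j, f j - 1)
      omega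

lemma fSYT_eq (l : List ℕ) (h : Anti l.toFinsupp) : fSYT l = eY l.sum l.toFinsupp := by
  rw [← card_FS h, fSYT, ← Set.ncard_coe_finset]
  congr 1
  ext T
  simp only [Set.mem_ofPred_eq, Finset.mem_coe, mem_FS h]
  rfl

lemma degree_toFinsupp (l : List ℕ) : l.toFinsupp.degree = l.sum := by
  rw [Finsupp.degree_apply, Finset.sum_subset l.toFinsupp_support_subset
    (fun x _ hx => Finsupp.notMem_support_iff.1 hx)]
  induction l with
  | nil => simp
  | cons a l ih =>
    rw [List.length_cons, Finset.sum_range_succ']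
    simp at ih ⊢
    omega

lemma Anti_toFinsupp (l : List ℕ) (h : l.SortedGE) : Anti l.toFinsupp := by
  intro i
  simp only [List.toFinsupp_apply]
  by_cases hi : i + 1 < l.length
  · rw [List.getD_eq_getElem _ _ hi, List.getD_eq_getElem _ _ (by omega)]
    exact h.getElem_ge_getElem_of_le (by omega)
  · rw [List.getD_eq_default _ _ (by omega)]; omega

def lP {n : ℕ} (p : n.Partition) : List ℕ := (p.parts.sort (· ≤ ·)).reverse

lemma lP_sorted {n : ℕ} (p : n.Partition) : (lP p).SortedGE := by
  have : (p.parts.sort (· ≤ ·)).SortedLE := (Multiset.pairwise_sort p.parts (· ≤ ·)).sortedLE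
  exact this.reverse

lemma lP_coe {n : ℕ} (p : n.Partition) : (lP p : Multiset ℕ) = p.parts := by
  simp [lP]

lemma lP_sum {n : ℕ} (p : n.Partition) : (lP p).sum = n := by
  rw [← Multiset.sum_coe, lP_coe, p.parts_sum]

lemma lP_pos {n : ℕ} (p : n.Partition) {x : ℕ} (h : x ∈ lP p) : 0 < x := by
  rw [← Multiset.mem_coe, lP_coe] at h
  exact p.parts_pos h

lemma toFinsupp_inj_aux {l1 l2 : List ℕ} (h2 : ∀ x ∈ l2, 0 < x)
    (h : l1.toFinsupp = l2.toFinsupp) : l2.length ≤ l1.length := by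
  by_contra hc
  have := DFunLike.congr_fun h l1.length
  simp only [List.toFinsupp_apply] at this
  rw [List.getD_eq_default _ _ le_rfl, List.getD_eq_getElem _ _ (by omega)] at this
  have := h2 _ (List.getElem_mem (show l1.length < l2.length by omega))
  omega

lemma toFinsupp_inj {l1 l2 : List ℕ} (h1 : ∀ x ∈ l1, 0 < x) (h2 : ∀ x ∈ l2, 0 < x)
    (h : l1.toFinsupp = l2.toFinsupp) : l1 = l2 := by
  apply List.ext_getElem (le_antisymm (toFinsupp_inj_aux h1 h.symm) (toFinsupp_inj_aux h2 h))
  intro i hi hi'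
  have := DFunLike.congr_fun h i
  simp only [List.toFinsupp_apply] at this
  rwa [List.getD_eq_getElem _ _ hi, List.getD_eq_getElem _ _ hi'] at this

lemma exists_list {f : ℕ →₀ ℕ} (hf : Anti f) :
    ∃ l : List ℕ, l.SortedGE ∧ (∀ x ∈ l, 0 < x) ∧ l.toFinsupp = f := by
  have hex : ∃ k, f k = 0 := by
    obtain ⟨k, hk⟩ := Infinite.exists_notMem_finset f.support
    exact ⟨k, by simpa using hk⟩
  refine ⟨(List.range (Nat.find hex)).map f, ?_, ?_, ?_⟩
  · rw [List.sortedGE_iff_getElem_ge_getElem_of_le]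
    intro i j hi hj hij
    simp only [List.getElem_map, List.getElem_range]
    exact hf.anti (by omega)
  · intro x hx
    simp only [List.mem_map, List.mem_range] at hx
    obtain ⟨a, ha, rfl⟩ := hx
    exact Nat.pos_of_ne_zero (Nat.find_min hex ha)
  · ext i
    rw [List.toFinsupp_apply]
    by_cases hi : i < Nat.find hex
    · rw [List.getD_eq_getElem _ _ (by simpa using hi)]
      simp
    · rw [List.getD_eq_default _ _ (by simpa using hi)]
      have := hf.anti (not_lt.1 hi)
      rw [Nat.find_spec hex] at this
      omega

lemma sum_eq_tY (n : ℕ) : ∑ p : n.Partition, fSYT (lP p) = tY n := by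
  rw [tY]
  refine Finset.sum_bij (fun p _ => (lP p).toFinsupp) ?_ ?_ ?_ ?_
  · intro p _
    rw [mem_PY, degree_toFinsupp, lP_sum]
    exact ⟨Anti_toFinsupp _ (lP_sorted p), rfl⟩
  · intro p _ q _ h
    have := toFinsupp_inj (fun x => lP_pos p) (fun x => lP_pos q) h
    apply Nat.Partition.ext
    rw [← lP_coe p, ← lP_coe q, this]
  · intro f hf
    obtain ⟨hf, hd⟩ := mem_PY.1 hf
    obtain ⟨l, hs, hp, rfl⟩ := exists_list hf
    rw [degree_toFinsupp] at hd
    let p : n.Partition := ⟨l, fun {i} hi => hp i (by simpa using hi), by simpa using hd⟩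
    refine ⟨p, Finset.mem_univ _, ?_⟩
    have : lP p = l := by
      have hperm : (lP p).Perm l := by
        rw [← Multiset.coe_eq_coe, lP_coe]
      exact hperm.eq_of_sortedGE (lP_sorted p) hs
    simp only [this]
  · intro p _
    rw [fSYT_eq _ (Anti_toFinsupp _ (lP_sorted p)), lP_sum]

/-- `Σ_{λ ⊢ n} f^λ` equals the number of involutions in `Sₙ`. -/
theorem sum_fSYT_eq_card_involutions (n : ℕ) :
    ∑ p : n.Partition, fSYT ((p.parts.sort (· ≤ ·)).reverse) =
      Nat.card {w : Equiv.Perm (Fin n) // w⁻¹ = w} := by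
  have h := (sum_eq_tY n).trans (tY_eq_iY n)
  simp only [isInv_iff]
  exact h
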